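/- Let R₃ be the unique positive root of R⁶+R⁵−4R⁴−8R³−10R²−6R−2 = 0 (R₃ ≈ 2.553). Then for all real x, y with 0 < x < R₃ and 0 < y < R₃, one has 2α(x,y)² + 3β(x,y)² − 4α(x,y)β(x,y) − 2α(x,y) + 2β(x,y) < 0. -/

import Mathlib

/-- The auxiliary function `α(x,y) = -d₁(x,y)/d₀(x,y)` of the BDF3 analysis. -/
noncomputable def alphaF (x y : ℝ) : ℝ :=
  x*(x^2*y^2 + 4*x*y^2 + 3*y^2 + 2*x*y + 3*y + 1) /
    ((y + 1)*(3*x^2*y + 4*x*y + 2*x + y + 1))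

/-- The auxiliary function `β(x,y) = d₂(x,y)/d₀(x,y)` of the BDF3 analysis. -/
noncomputable def betaF (x y : ℝ) : ℝ :=
  x*(x + 1)^2*y^2 / ((y + 1)*(3*x^2*y + 4*x*y + 2*x + y + 1))

/-- Lemma A.3: if `R₃` is the unique positive root of `R⁶+R⁵-4R⁴-8R³-10R²-6R-2 = 0`
(`R₃ ≈ 2.553`), then `2α² + 3β² - 4αβ - 2α + 2β < 0` for all `0 < x < R₃`, `0 < y < R₃`. -/
theorem elliptic_inequality (R3 : ℝ) (hpos : 0 < R3)
    (hroot : R3^6 + R3^5 - 4*R3^4 - 8*R3^3 - 10*R3^2 - 6*R3 - 2 = 0)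
    (huniq : ∀ x : ℝ, 0 < x → x^6 + x^5 - 4*x^4 - 8*x^3 - 10*x^2 - 6*x - 2 = 0 → x = R3) :
    ∀ x y : ℝ, 0 < x → x < R3 → 0 < y → y < R3 →
      2*(alphaF x y)^2 + 3*(betaF x y)^2 - 4*(alphaF x y)*(betaF x y)
        - 2*(alphaF x y) + 2*(betaF x y) < 0 := by
  intro x y hx hxR hy hyR
  have hE : 0 < 3*x^2*y + 4*x*y + 2*x + y + 1 := by positivity
  have key : x*(x+1) < 2*(1+1/y)^2*(2+1/(x+1)*(1/y))*(1+1/(x+1)*(1/y)) := by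
    have h1 : x*(x+1) < R3*(R3+1) := by nlinarith
    have h2 : R3*(R3+1) = 2*(1+1/R3)^2*(2+1/(R3+1)*(1/R3))*(1+1/(R3+1)*(1/R3)) := by
      have : R3 + 1 ≠ 0 := by positivity
      field_simp
      linear_combination hroot
    have h3 : 2*(1+1/R3)^2*(2+1/(R3+1)*(1/R3))*(1+1/(R3+1)*(1/R3))
        ≤ 2*(1+1/y)^2*(2+1/(x+1)*(1/y))*(1+1/(x+1)*(1/y)) := by
      gcongr
    linarith
  have key2 : x*(x+1)^3*y^4 < 2*(y+1)^2*(2*x*y+2*y+1)*(x*y+y+1) := by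
    have h := mul_lt_mul_of_pos_right key (show 0 < (x+1)^2*y^4 by positivity)
    have e : 2*(1+1/y)^2*(2+1/(x+1)*(1/y))*(1+1/(x+1)*(1/y)) * ((x+1)^2*y^4)
        = 2*(y+1)^2*(2*x*y+2*y+1)*(x*y+y+1) := by
      have : x + 1 ≠ 0 := by positivity
      field_simp
    rw [e] at h
    linarith
  have e : 2*(alphaF x y)^2 + 3*(betaF x y)^2 - 4*(alphaF x y)*(betaF x y)
        - 2*(alphaF x y) + 2*(betaF x y)
      = -(x*(x+1)*(2*(y+1)^2*(2*x*y+2*y+1)*(x*y+y+1) - x*(x+1)^3*y^4)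
        / ((y + 1)*(3*x^2*y + 4*x*y + 2*x + y + 1))^2) := by
    unfold alphaF betaF
    generalize hE' : 3*x^2*y + 4*x*y + 2*x + y + 1 = E at hE
    have : y + 1 ≠ 0 := by positivity
    have : E ≠ 0 := hE.ne'
    field_simp
    rw [← hE']
    ring
  rw [e, neg_lt_zero]
  have := sub_pos.2 key2
  positivity
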